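/- Let 𝐌 = (S, ℐ) be a matroid and G = (S, E) a finite simple graph on its ground set. Let R be a maximum matching of (𝐌, G) and let M be a maximal matching of (𝐌, G) with |M| < |R|. Then there exists a maximal matching M' of (𝐌, G) such that |M| ≤ |M'|, |M △ M'| ≤ 4, and either |R △ M'| < |R △ M| or |M| < |M'|. -/

import Mathlib

open scoped symmDiff

/-- A set `F` of edges is a matching of the pair `(M, G)` if its edges are edges of `G`,
pairwise vertex-disjoint, and the set of endpoints of its edges is independent in `M`. -/
def MatroidMatching {α : Type*} (M : Matroid α) (G : SimpleGraph α)
    (F : Set (Sym2 α)) : Prop :=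
  F ⊆ G.edgeSet ∧ (F.Pairwise fun e f => ∀ v : α, v ∈ e → v ∉ f) ∧
    M.Indep {v : α | ∃ e ∈ F, v ∈ e}

/-!
Since `|M₀| < |R|` and `|V(F)| = 2|F|` for a matching `F`, the independent set `V(M₀)` can be
augmented by some `x` covered by `R`; let `xy` be the edge of `R` at `x`. If `y` is covered by
`M₀`, exchange the edge of `M₀` at `y` for `xy`. Otherwise `V(M₀) ∪ {x, y}` is dependent by
maximality of `M₀`; its circuit contains an element outside the independent set `V(R)`, and the
edge of `M₀` at that element is exchanged for `xy`. Either way an edge outside `R` is replaced by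
one of `R`.

Extend the result to a maximal matching `M'`. If nothing is added, `M'` is closer to `R`; otherwise
it is larger than `M₀`. In both cases `M'` is near `M₀`, because maximal matchings are locally
2-approximate: `|F \ M₀| ≤ 2 |M₀ \ F|` for every matching `F`.
-/

section Set

variable {β : Type*} {A B : Set β} {e f : β}

theorem symmDiff_insert_sdiff_singleton_ssubset (he : e ∈ A \ B) (hf : f ∈ B \ A) :
    B ∆ insert f (A \ {e}) ⊂ B ∆ A := by
  refine Set.ssubset_iff_exists.2 ⟨fun g hg => ?_, f, ?_⟩ <;> grind

end Set

section Matroid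

variable {α : Type*} {M : Matroid α} {I J X : Set α} {y : α}

theorem encard_sdiff_le_encard_sdiff_of_isBasis (hJ : M.IsBasis J X) (hI : M.Indep I)
    (hIX : I ⊆ X) : (I \ J).encard ≤ (J \ I).encard := by
  obtain ⟨I', hI', hII'⟩ := hI.subset_isBasis_of_subset hIX hJ.subset_ground
  calc (I \ J).encard ≤ (I' \ J).encard := Set.encard_le_encard (Set.sdiff_subset_sdiff_left hII')
    _ = (J \ I').encard := hI'.isBase_restrict.encard_sdiff_comm hJ.isBase_restrict
    _ ≤ (J \ I).encard := Set.encard_le_encard (Set.sdiff_subset_sdiff_right hII')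

theorem exists_indep_insert_sdiff_singleton (hI : M.Indep I) (hJ : M.Indep J) (hyJ : y ∈ J)
    (hyI : ¬M.Indep (insert y I)) : ∃ z ∈ I \ J, M.Indep (insert y I \ {z}) := by
  have hy : y ∉ I := fun hy => hyI (by rwa [Set.insert_eq_of_mem hy])
  have hycl : y ∈ M.closure I := by
    by_contra hycl
    exact hyI ((hI.notMem_closure_iff_of_notMem hy (hJ.subset_ground hyJ)).1 hycl)
  obtain ⟨z, hzC, hzJ⟩ := Set.not_subset.1 fun hCJ =>
    (hI.fundCircuit_isCircuit hycl hy).dep.not_indep (hJ.subset hCJ)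
  have hzI : z ∈ I := (M.fundCircuit_subset_insert y I hzC).resolve_left fun hzy =>
    hzJ (hzy ▸ hyJ)
  exact ⟨z, ⟨hzI, hzJ⟩, (hI.mem_fundCircuit_iff hycl hy).1 hzC⟩

end Matroid

/-- The set `V(F)` of endpoints of the edges in `F`, spelled exactly as the set whose independence
`MatroidMatching` demands. -/
def coveredVerts {α : Type*} (F : Set (Sym2 α)) : Set α := {v | ∃ e ∈ F, v ∈ e}

section CoveredVerts

variable {α : Type*} {F F' : Set (Sym2 α)}

theorem coveredVerts_eq_biUnion (F : Set (Sym2 α)) :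
    coveredVerts F = ⋃ e ∈ F, (e : Set α) := by
  ext v
  simp [coveredVerts]

theorem coveredVerts_insert (f : Sym2 α) (F : Set (Sym2 α)) :
    coveredVerts (insert f F) = (f : Set α) ∪ coveredVerts F := by
  simp only [coveredVerts_eq_biUnion, Set.biUnion_insert]

theorem coveredVerts_mono (h : F ⊆ F') : coveredVerts F ⊆ coveredVerts F' :=
  fun _ ⟨e, he, hv⟩ => ⟨e, h he, hv⟩

theorem coveredVerts_subset_union_sdiff (F F' : Set (Sym2 α)) :
    coveredVerts F ⊆ coveredVerts (F \ F') ∪ coveredVerts F' := by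
  rintro v ⟨e, he, hve⟩
  by_cases heF' : e ∈ F'
  · exact Or.inr ⟨e, heF', hve⟩
  · exact Or.inl ⟨e, ⟨he, heF'⟩, hve⟩

end CoveredVerts

namespace MatroidMatching

variable {α : Type*} {M : Matroid α} {G : SimpleGraph α} {F F' M₀ R : Set (Sym2 α)}
  {e f : Sym2 α} {v x y : α} {J X : Set α}

theorem indep_coveredVerts (h : MatroidMatching M G F) : M.Indep (coveredVerts F) :=
  h.2.2

theorem eq_of_mem (h : MatroidMatching M G F) (he : e ∈ F) (hf : f ∈ F) (hve : v ∈ e)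
    (hvf : v ∈ f) : e = f := by
  by_contra hne
  exact h.2.1 he hf hne v hve hvf

theorem subset (h : MatroidMatching M G F) (hF : F' ⊆ F) : MatroidMatching M G F' :=
  ⟨hF.trans h.1, h.2.1.mono hF, h.indep_coveredVerts.subset (coveredVerts_mono hF)⟩

theorem coveredVerts_sdiff (h : MatroidMatching M G F) (hF : F' ⊆ F) :
    coveredVerts (F \ F') = coveredVerts F \ coveredVerts F' := by
  ext v
  constructor
  · rintro ⟨e, ⟨heF, heF'⟩, hve⟩
    exact ⟨⟨e, heF, hve⟩, fun ⟨f, hf, hvf⟩ => heF' (h.eq_of_mem heF (hF hf) hve hvf ▸ hf)⟩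
  · rintro ⟨⟨e, he, hve⟩, hv⟩
    exact ⟨e, ⟨he, fun heF' => hv ⟨e, heF', hve⟩⟩, hve⟩

theorem insert_edge (h : MatroidMatching M G F) (hf : f ∈ G.edgeSet)
    (hdisj : Disjoint (f : Set α) (coveredVerts F)) (hindep : M.Indep (f ∪ coveredVerts F)) :
    MatroidMatching M G (insert f F) := by
  have hnotMem : ∀ e ∈ F, ∀ v ∈ f, v ∉ e := fun e he v hvf hve =>
    Set.disjoint_left.1 hdisj hvf ⟨e, he, hve⟩
  refine ⟨Set.insert_subset hf h.1, ?_, by rwa [← coveredVerts_insert] at hindep⟩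
  exact h.2.1.insert fun e he _ => ⟨hnotMem e he, fun v hve hvf => hnotMem e he v hvf hve⟩

theorem exchange (h : MatroidMatching M G F) (he : e ∈ F) (hf : f ∈ G.edgeSet)
    (hinter : (f : Set α) ∩ coveredVerts F ⊆ e)
    (hindep : M.Indep (f ∪ coveredVerts F \ e)) :
    MatroidMatching M G (insert f (F \ {e})) := by
  have hcov : coveredVerts (F \ {e}) = coveredVerts F \ e := by
    rw [h.coveredVerts_sdiff (Set.singleton_subset_iff.2 he)]
    simp [coveredVerts_eq_biUnion {e}]
  refine (h.subset Set.sdiff_subset).insert_edge hf ?_ (hcov ▸ hindep)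
  rw [hcov, Set.disjoint_left]
  exact fun v hvf hv => hv.2 (hinter ⟨hvf, hv.1⟩)

theorem encard_le_of_forall_inter_nonempty (h : MatroidMatching M G F)
    (hX : ∀ f ∈ F, ((f : Set α) ∩ X).Nonempty) : F.encard ≤ X.encard := by
  choose φ hφf hφX using hX
  have hinj : Function.Injective fun f : F => (⟨φ f f.2, hφX f f.2⟩ : X) := fun f g hfg =>
    Subtype.ext <| h.eq_of_mem f.2 g.2 (hφf f f.2) (Subtype.mk.inj hfg ▸ hφf g g.2)
  exact Function.Embedding.encard_le ⟨_, hinj⟩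

theorem encard_coveredVerts (h : MatroidMatching M G F) :
    (coveredVerts F).encard = 2 * F.encard := by
  obtain hfin | hinf := F.finite_or_infinite
  · have hdisj : F.PairwiseDisjoint fun e => (e : Set α) := fun e he f hf hef =>
      Set.disjoint_left.2 (h.2.1 he hf hef)
    have htwo : ∀ e ∈ F, (e : Set α).encard = 2 := by
      rintro ⟨x, y⟩ he
      simpa using Set.encard_pair (h.1 he).ne
    rw [coveredVerts_eq_biUnion, hfin.encard_biUnion hdisj, finsum_mem_congr rfl htwo,
      finsum_mem_eq_finite_toFinset_sum _ hfin, Finset.sum_const, nsmul_eq_mul, mul_comm,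
      hfin.encard_eq_coe_toFinset_card]
  · have hle : F.encard ≤ (coveredVerts F).encard :=
      h.encard_le_of_forall_inter_nonempty fun f hf =>
        ⟨f.out.1, f.out_fst_mem, f, hf, f.out_fst_mem⟩
    rw [hinf.encard_eq, top_le_iff] at hle
    simp [hle, hinf.encard_eq]

theorem not_indep_union_coveredVerts (hM : Maximal (MatroidMatching M G) M₀)
    (hf : f ∈ G.edgeSet) (hdisj : Disjoint (f : Set α) (coveredVerts M₀)) :
    ¬M.Indep (f ∪ coveredVerts M₀) := fun hindep => by
  have hfM₀ : f ∈ M₀ := hM.mem_of_prop_insert (hM.prop.insert_edge hf hdisj hindep)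
  exact Set.disjoint_left.1 hdisj f.out_fst_mem ⟨f, hfM₀, f.out_fst_mem⟩

-- Otherwise `f` could be added to `M₀`: it would lie in `J` and avoid `V(M₀)`.
theorem inter_sdiff_union_inter_nonempty (hM : Maximal (MatroidMatching M G) M₀)
    (hF : MatroidMatching M G F) (hJ : M.Indep J) (hM₀J : coveredVerts M₀ ⊆ J)
    (hf : f ∈ F \ M₀) :
    ((f : Set α) ∩
      (coveredVerts F \ J ∪ coveredVerts (M₀ \ F) ∩ coveredVerts F)).Nonempty := by
  by_contra! hempty
  have hfJ : (f : Set α) ⊆ J := fun v hv => by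
    by_contra hvJ
    exact hempty.subset ⟨hv, Or.inl ⟨⟨f, hf.1, hv⟩, hvJ⟩⟩
  have hdisj : Disjoint (f : Set α) (coveredVerts M₀) := by
    rw [Set.disjoint_left]
    rintro v hv ⟨e, he, hve⟩
    have heF : e ∉ F := fun heF => hf.2 (hF.eq_of_mem hf.1 heF hv hve ▸ he)
    exact hempty.subset ⟨hv, Or.inr ⟨⟨e, ⟨he, heF⟩, hve⟩, f, hf.1, hv⟩⟩
  exact not_indep_union_coveredVerts hM (hF.1 hf.1) hdisj
    (hJ.subset (Set.union_subset hfJ hM₀J))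

theorem encard_sdiff_le_two_mul (hM : Maximal (MatroidMatching M G) M₀)
    (hF : MatroidMatching M G F) : (F \ M₀).encard ≤ 2 * (M₀ \ F).encard := by
  obtain ⟨J, hJ, hM₀J⟩ := hM.prop.indep_coveredVerts.subset_isBasis_of_subset
    (Set.subset_union_left (t := coveredVerts F))
    (Set.union_subset hM.prop.indep_coveredVerts.subset_ground
      hF.indep_coveredVerts.subset_ground)
  set D := coveredVerts (M₀ \ F)
  have hJF : J \ coveredVerts F ⊆ D \ coveredVerts F := fun v ⟨hvJ, hvF⟩ =>
    have hvM₀ : v ∈ coveredVerts M₀ := (hJ.subset hvJ).resolve_right hvF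
    ⟨(coveredVerts_subset_union_sdiff M₀ F hvM₀).resolve_right hvF, hvF⟩
  calc (F \ M₀).encard
      ≤ (coveredVerts F \ J ∪ D ∩ coveredVerts F).encard :=
        (hF.subset Set.sdiff_subset).encard_le_of_forall_inter_nonempty fun f hf =>
          inter_sdiff_union_inter_nonempty hM hF hJ.indep hM₀J hf
    _ ≤ (coveredVerts F \ J).encard + (D ∩ coveredVerts F).encard := Set.encard_union_le _ _
    _ ≤ (J \ coveredVerts F).encard + (D ∩ coveredVerts F).encard := by
        gcongr ?_ + _
        exact encard_sdiff_le_encard_sdiff_of_isBasis hJ hF.indep_coveredVerts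
          Set.subset_union_right
    _ ≤ (D \ coveredVerts F).encard + (D ∩ coveredVerts F).encard := by gcongr
    _ = D.encard := Set.encard_sdiff_add_encard_inter _ _
    _ = 2 * (M₀ \ F).encard := (hM.prop.subset Set.sdiff_subset).encard_coveredVerts

theorem encard_le_two_mul (hM : Maximal (MatroidMatching M G) M₀)
    (hF : MatroidMatching M G F) : F.encard ≤ 2 * M₀.encard :=
  calc F.encard = (F \ M₀).encard + (F ∩ M₀).encard :=
        (Set.encard_sdiff_add_encard_inter F M₀).symm
    _ ≤ 2 * (M₀ \ F).encard + 2 * (M₀ ∩ F).encard := by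
        rw [Set.inter_comm F]
        exact add_le_add (encard_sdiff_le_two_mul hM hF) (le_mul_of_one_le_left' (by simp))
    _ = 2 * M₀.encard := by rw [← mul_add, Set.encard_sdiff_add_encard_inter]

theorem encard_symmDiff_le_three_mul (hM : Maximal (MatroidMatching M G) M₀)
    (hF : MatroidMatching M G F) : (M₀ ∆ F).encard ≤ 3 * (M₀ \ F).encard :=
  calc (M₀ ∆ F).encard ≤ (M₀ \ F).encard + (F \ M₀).encard := Set.encard_union_le _ _
    _ ≤ (M₀ \ F).encard + 2 * (M₀ \ F).encard := by
        gcongr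
        exact encard_sdiff_le_two_mul hM hF
    _ = 3 * (M₀ \ F).encard := by ring

theorem finite_of_maximal_of_finite (hM : Maximal (MatroidMatching M G) M₀) (hfin : M₀.Finite)
    (hF : MatroidMatching M G F) : F.Finite :=
  Set.finite_of_encard_le_coe (k := 2 * M₀.ncard) <| by
    simpa [hfin.cast_ncard_eq] using encard_le_two_mul hM hF

theorem exists_maximal_superset (hM : Maximal (MatroidMatching M G) M₀) (hfin : M₀.Finite)
    (hF : MatroidMatching M G F) : ∃ M', F ⊆ M' ∧ Maximal (MatroidMatching M G) M' := by
  have hbdd : ∃ n : ℕ, ∀ F', MatroidMatching M G F' → F'.encard ≤ n :=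
    ⟨2 * M₀.ncard, fun F' hF' => by
      simpa [hfin.cast_ncard_eq] using encard_le_two_mul hM hF'⟩
  simpa only [Set.subset_univ, and_true] using
    Matroid.existsMaximalSubsetProperty_of_bdd hbdd Set.univ F hF F.subset_univ

theorem exists_exchange_of_mem_coveredVerts (hF : MatroidMatching M G F)
    (hR : MatroidMatching M G R) (hxyR : s(x, y) ∈ R) (hxF : x ∉ coveredVerts F)
    (hyF : y ∈ coveredVerts F) (hxI : M.Indep (insert x (coveredVerts F))) :
    ∃ e ∈ F \ R, MatroidMatching M G (insert s(x, y) (F \ {e})) := by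
  obtain ⟨e, he, hye⟩ := hyF
  have heR : e ∉ R := fun heR => hxF ⟨s(x, y),
    hR.eq_of_mem heR hxyR hye (Sym2.mem_mk_right x y) ▸ he, Sym2.mem_mk_left x y⟩
  refine ⟨e, ⟨he, heR⟩, hF.exchange he (hR.1 hxyR) ?_ (hxI.subset ?_)⟩ <;> rw [Sym2.coe_mk]
  · rintro v ⟨rfl | rfl, hv⟩
    exacts [(hxF hv).elim, hye]
  · rintro v ((rfl | rfl) | hv)
    exacts [Or.inl rfl, Or.inr ⟨e, he, hye⟩, Or.inr hv.1]

theorem exists_exchange_of_notMem_coveredVerts (hM : Maximal (MatroidMatching M G) M₀)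
    (hR : MatroidMatching M G R) (hxyR : s(x, y) ∈ R) (hxM₀ : x ∉ coveredVerts M₀)
    (hyM₀ : y ∉ coveredVerts M₀) (hxI : M.Indep (insert x (coveredVerts M₀))) :
    ∃ e ∈ M₀ \ R, MatroidMatching M G (insert s(x, y) (M₀ \ {e})) := by
  have hxR : x ∈ coveredVerts R := ⟨_, hxyR, Sym2.mem_mk_left x y⟩
  have hyR : y ∈ coveredVerts R := ⟨_, hxyR, Sym2.mem_mk_right x y⟩
  have hdisj : Disjoint (s(x, y) : Set α) (coveredVerts M₀) := by simp [hxM₀, hyM₀]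
  have hyI : ¬M.Indep (insert y (insert x (coveredVerts M₀))) := by
    simpa [Set.insert_union, Set.insert_comm] using
      not_indep_union_coveredVerts hM (hR.1 hxyR) hdisj
  obtain ⟨z, ⟨hzI, hzR⟩, hz⟩ :=
    exists_indep_insert_sdiff_singleton hxI hR.indep_coveredVerts hyR hyI
  obtain ⟨e, he, hze⟩ : z ∈ coveredVerts M₀ := hzI.resolve_left fun hzx => hzR (hzx ▸ hxR)
  have heR : e ∉ R := fun heR => hzR ⟨e, heR, hze⟩
  refine ⟨e, ⟨he, heR⟩, hM.prop.exchange he (hR.1 hxyR) ?_ (hz.subset ?_)⟩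
  · exact hdisj.inter_eq ▸ Set.empty_subset _
  · rw [Sym2.coe_mk]
    rintro v ((rfl | rfl) | hv)
    · exact ⟨by simp, fun hvz => hzR (hvz ▸ hxR)⟩
    · exact ⟨by simp, fun hvz => hzR (hvz ▸ hyR)⟩
    · exact ⟨Or.inr (Or.inr hv.1), fun hvz => hv.2 (hvz ▸ hze)⟩

theorem exists_exchange_of_encard_lt (hM : Maximal (MatroidMatching M G) M₀)
    (hR : MatroidMatching M G R) (hlt : M₀.encard < R.encard) :
    ∃ e ∈ M₀ \ R, ∃ f ∈ R \ M₀, MatroidMatching M G (insert f (M₀ \ {e})) := by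
  have hcov : (coveredVerts M₀).encard < (coveredVerts R).encard := by
    rw [hM.prop.encard_coveredVerts, hR.encard_coveredVerts]
    exact ENat.mul_right_strictMono two_ne_zero (ENat.natCast_ne_top 2) hlt
  obtain ⟨x, ⟨⟨f, hfR, y, rfl⟩, hxM₀⟩, hxI⟩ :=
    hM.prop.indep_coveredVerts.augment hR.indep_coveredVerts hcov
  have hfM₀ : s(x, y) ∉ M₀ := fun hf => hxM₀ ⟨_, hf, Sym2.mem_mk_left x y⟩
  obtain ⟨e, he, hexch⟩ : ∃ e ∈ M₀ \ R, MatroidMatching M G (insert s(x, y) (M₀ \ {e})) := by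
    by_cases hyM₀ : y ∈ coveredVerts M₀
    · exact exists_exchange_of_mem_coveredVerts hM.prop hR hfR hxM₀ hyM₀ hxI
    · exact exists_exchange_of_notMem_coveredVerts hM hR hfR hxM₀ hyM₀ hxI
  exact ⟨e, he, s(x, y), ⟨hfR, hfM₀⟩, hexch⟩

end MatroidMatching

theorem stmt9_general {α : Type*} {M : Matroid α} {G : SimpleGraph α} {R M₀ : Set (Sym2 α)}
    (hR : MatroidMatching M G R) (hM : Maximal (MatroidMatching M G) M₀) (hfin : M₀.Finite)
    (hlt : M₀.ncard < R.ncard) :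
    ∃ M' : Set (Sym2 α), Maximal (MatroidMatching M G) M' ∧
      M₀.ncard ≤ M'.ncard ∧ (M₀ ∆ M').ncard ≤ 3 ∧
      ((R ∆ M').ncard < (R ∆ M₀).ncard ∨ M₀.ncard < M'.ncard) := by
  have hRfin : R.Finite := Set.finite_of_ncard_pos (Nat.zero_lt_of_lt hlt)
  obtain ⟨e, he, f, hf, hexch⟩ := MatroidMatching.exists_exchange_of_encard_lt hM hR
    (by rwa [← hfin.cast_ncard_eq, ← hRfin.cast_ncard_eq, Nat.cast_lt])
  obtain ⟨M', hsub, hM'⟩ := MatroidMatching.exists_maximal_superset hM hfin hexch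
  have hM'fin : M'.Finite := MatroidMatching.finite_of_maximal_of_finite hM hfin hM'.prop
  have hcard : (insert f (M₀ \ {e})).ncard = M₀.ncard := Set.ncard_exchange hf.2 he.1
  refine ⟨M', hM', hcard ▸ Set.ncard_le_ncard hsub hM'fin, ?_, ?_⟩
  · have hsdiff : M₀ \ M' ⊆ {e} :=
      Set.sdiff_subset_comm.1 ((Set.subset_insert f _).trans hsub)
    have hdist : (M₀ ∆ M').encard ≤ 3 * 1 :=
      (MatroidMatching.encard_symmDiff_le_three_mul hM hM'.prop).trans <| by
        gcongr
        exact (Set.encard_le_encard hsdiff).trans_eq (Set.encard_singleton e)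
    exact (Set.encard_le_coe_iff_finite_ncard_le.1 hdist).2
  · obtain heq | hssub := hsub.eq_or_ssubset
    · left
      rw [← heq]
      exact Set.ncard_lt_ncard (symmDiff_insert_sdiff_singleton_ssubset he hf)
        (hRfin.symmDiff hfin)
    · exact Or.inr (hcard ▸ Set.ncard_lt_ncard hssub hM'fin)

/-- If `R` is a maximum matching of `(M, G)` and `M₀` a maximal matching with
`|M₀| < |R|`, then there is a maximal matching `M'` with `|M₀| ≤ |M'|`, `|M₀ ∆ M'| ≤ 4`,
and either `|R ∆ M'| < |R ∆ M₀|` or `|M₀| < |M'|`. -/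
theorem stmt9 {α : Type*} [Fintype α] (M : Matroid α) (hE : M.E = Set.univ)
    (G : SimpleGraph α) {R M₀ : Set (Sym2 α)}
    (hR : MatroidMatching M G R ∧
      ∀ F : Set (Sym2 α), MatroidMatching M G F → F.ncard ≤ R.ncard)
    (hM : Maximal (MatroidMatching M G) M₀)
    (hlt : M₀.ncard < R.ncard) :
    ∃ M' : Set (Sym2 α), Maximal (MatroidMatching M G) M' ∧
      M₀.ncard ≤ M'.ncard ∧ (M₀ ∆ M').ncard ≤ 4 ∧
      ((R ∆ M').ncard < (R ∆ M₀).ncard ∨ M₀.ncard < M'.ncard) := by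
  obtain ⟨M', hM', hle, hdist, hprogress⟩ := stmt9_general hR.1 hM M₀.toFinite hlt
  exact ⟨M', hM', hle, hdist.trans (by norm_num), hprogress⟩
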